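/- Let q, a, b, c, d, z be complex numbers with q, a, b, c, d, z nonzero, let x = (z + z^{−1})/2, and let n ≥ 1. Define the (n+1) × (n+1) matrix A by A_{i,j} = (ac;q)_i (ad;q)_i (bc;q)_j (bd;q)_j (ab;q)_{i+j} / (abcd;q)_{i+j} for 0 ≤ i ≤ n−1 and 0 ≤ j ≤ n, and A_{n,j} = (bz;q)_j (b/z;q)_j for 0 ≤ j ≤ n. Assume (abcd;q)_{2n−1} ≠ 0 and that all q-shifted factorials in the denominators of the Askey-Wilson polynomial are nonzero. Then det(A_{i,j})_{0 ≤ i,j ≤ n} = C · p_n(x; a,b,c,d; q), where C = (−1)^n a^{n(n−1)/2} b^{n(n+1)/2} q^{n(n−1)(2n−1)/6} ∏_{i=0}^{n−1} (ab;q)_i (ac;q)_i (ad;q)_i (bc;q)_i (bd;q)_i (cd;q)_i (q;q)_i / (abcd;q)_{n+i}. -/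

import Mathlib

/-- The q-shifted factorial `(a;q)_n = ∏_{k=0}^{n-1} (1 - a q^k)`. -/
noncomputable def qPoch (q a : ℂ) (n : ℕ) : ℂ := ∏ k ∈ Finset.range n, (1 - a * q ^ k)

/-- The Askey-Wilson polynomial evaluated at `x = (z + z⁻¹)/2`. -/
noncomputable def awPoly (q a b c d z : ℂ) (n : ℕ) : ℂ :=
  a ^ (-(n : ℤ)) * (qPoch q (a * b) n * qPoch q (a * c) n * qPoch q (a * d) n) *
    ∑ k ∈ Finset.range (n + 1),
      qPoch q (q ^ (-(n : ℤ))) k * qPoch q (a * b * c * d * q ^ ((n : ℤ) - 1)) k *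
        qPoch q (a * z) k * qPoch q (a / z) k * q ^ k /
      (qPoch q q k * qPoch q (a * b) k * qPoch q (a * c) k * qPoch q (a * d) k)

/-!
Write `φ_k = (az, a/z; q)_k`, `ψ_j = (bz, b/z; q)_j`, and let `L` be the Askey-Wilson moment
functional with `L(1) = 1`. The first `n` rows of the matrix hold the moments `L(φ_i ψ_j)`
(`awMoment`), and the last row holds the `ψ_j` themselves.

The polynomial `p_n` is symmetric in `a` and `b`, so it also has an expansion `p_n = ∑ e_j ψ_j`
(`awPoly_eq_sum_b`), and `∑_j e_j L(φ_i ψ_j) = 0` for `i < n` (`sum_awCoeff_mul_awMoment`). Adding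
the combination of the columns with coefficients `e_j` to the last one therefore leaves only the
corner entry `p_n` there, whence `e_n · det A = p_n · det (L(φ_i ψ_j))_{i,j<n}` (`det_bordered`). The
same argument with last row `L(φ_n ψ_j)` gives a first-order recurrence for the moment determinant,
solved in `det_awMoment`; since `e_n ≠ 0`, the theorem follows.

Both the symmetry and the pairing reduce to the `q`-Pfaff–Saalschütz sum. It is used in a polynomial
form (`sum_saalTerm`) whose only denominators are `(q; q)_k`, so that degenerate values of the
parameters (for instance `(bc; q)_j = 0`) need no separate treatment. For the symmetry, `φ_k` is
first expanded in the `ψ_j` (`connection`).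
-/

/-! ### Shifted factorials -/

lemma qPoch_zero (q a : ℂ) : qPoch q a 0 = 1 := by simp [qPoch]

lemma qPoch_succ (q a : ℂ) (n : ℕ) : qPoch q a (n + 1) = qPoch q a n * (1 - a * q ^ n) := by
  simp [qPoch, Finset.prod_range_succ]

lemma qPoch_add (q a : ℂ) (m n : ℕ) :
    qPoch q a (m + n) = qPoch q a m * qPoch q (a * q ^ m) n := by
  simp only [qPoch, Finset.prod_range_add, pow_add, mul_assoc]

lemma qPoch_succ' (q a : ℂ) (n : ℕ) : qPoch q a (n + 1) = (1 - a) * qPoch q (a * q) n := by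
  rw [add_comm, qPoch_add, qPoch_succ, qPoch_zero]; simp

lemma qPoch_ne_zero_of_le {q a : ℂ} {m n : ℕ} (h : m ≤ n) (hn : qPoch q a n ≠ 0) :
    qPoch q a m ≠ 0 := by
  obtain ⟨d, rfl⟩ := Nat.exists_eq_add_of_le h
  rw [qPoch_add] at hn
  exact left_ne_zero_of_mul hn

/-! ### The `q`-Pfaff–Saalschütz sum -/

/-- The `k`-th term of the balanced `₃φ₂` series with upper parameters `q⁻ᴺ, Buvq^(N-1), B` and lower
parameters `Bu, Bv`, multiplied through by `(Bu, Bv; q)_N` so that no condition on the lower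
parameters is needed. -/
noncomputable def saalTerm (q B u v : ℂ) (N k : ℕ) : ℂ :=
  qPoch q (q ^ N)⁻¹ k * qPoch q (B * u * v * q ^ N / q) k * qPoch q B k * q ^ k / qPoch q q k *
    (qPoch q (B * u * q ^ k) (N - k) * qPoch q (B * v * q ^ k) (N - k))

/-- The `q`-Zeilberger certificate: the combination of `saalTerm` for consecutive `N` telescopes in
`k`, and these are its partial sums. -/
lemma sum_saalTerm_partial (q B u v : ℂ) (hq : q ≠ 0) (N : ℕ) (hqN : qPoch q q N ≠ 0) (m : ℕ)
    (hm : m ≤ N) :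
    ∑ k ∈ Finset.range (m + 1),
        (saalTerm q B u v (N + 1) k - B * (1 - u * q ^ N) * (1 - v * q ^ N) * saalTerm q B u v N k)
      = (1 - B * u * v * q ^ (2 * N)) * (qPoch q (q ^ N)⁻¹ m * qPoch q (B * u * v * q ^ N) m *
          qPoch q B (m + 1) / qPoch q q m *
          (qPoch q (B * u * q ^ m) (N - m) * qPoch q (B * v * q ^ m) (N - m))) := by
  induction m with
  | zero =>
    simp only [zero_add, Finset.sum_range_one, saalTerm, qPoch_zero, qPoch_succ, Nat.sub_zero,
      pow_zero]
    ring
  | succ m ih =>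
    rw [Finset.sum_range_succ, ih (by omega)]
    obtain ⟨d, rfl⟩ := Nat.exists_eq_add_of_le hm
    have hq1 : qPoch q q (m + 1) ≠ 0 := qPoch_ne_zero_of_le hm hqN
    have e1 : m + 1 + d + 1 - (m + 1) = d + 1 := by omega
    have e2 : m + 1 + d - (m + 1) = d := by omega
    have e3 : m + 1 + d - m = d + 1 := by omega
    have f1 : (q ^ (m + 1 + d + 1))⁻¹ * q = (q ^ (m + 1 + d))⁻¹ := by
      rw [pow_succ q (m + 1 + d)]; field_simp
    have f2 : B * u * v * q ^ (m + 1 + d + 1) / q = B * u * v * q ^ (m + 1 + d) := by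
      rw [pow_succ q (m + 1 + d)]; field_simp
    have f3 : B * u * v * q ^ (m + 1 + d) / q * q = B * u * v * q ^ (m + 1 + d) := by
      field_simp
    have g1 (x : ℂ) : qPoch q (x * q ^ m) (d + 1)
        = (1 - x * q ^ m) * qPoch q (x * q ^ (m + 1)) d := by
      rw [qPoch_succ', mul_assoc x, ← pow_succ]
    simp only [saalTerm, e1, e2, e3, g1, f2]
    rw [qPoch_succ' q (q ^ (m + 1 + d + 1))⁻¹ m, f1, qPoch_succ q (q ^ (m + 1 + d))⁻¹ m,
      qPoch_succ' q (B * u * v * q ^ (m + 1 + d) / q) m, f3,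
      qPoch_succ q (B * u * v * q ^ (m + 1 + d)) m, qPoch_succ q B (m + 1),
      qPoch_succ q (B * u * q ^ (m + 1)) d, qPoch_succ q (B * v * q ^ (m + 1)) d]
    rw [qPoch_succ q q m] at hq1 ⊢
    have h1 := left_ne_zero_of_mul hq1
    have h2 := right_ne_zero_of_mul hq1
    generalize qPoch q (q ^ (m + 1 + d))⁻¹ m = x1
    generalize qPoch q (B * u * v * q ^ (m + 1 + d)) m = x2
    generalize qPoch q (B * u * q ^ (m + 1)) d = x3
    generalize qPoch q (B * v * q ^ (m + 1)) d = x4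
    generalize qPoch q B (m + 1) = x5
    generalize qPoch q q m = x6 at *
    have p1 : q ^ (m + 1 + d) = q ^ m * q * q ^ d := by ring
    have p2 : q ^ (m + 1 + d + 1) = q ^ m * q * q ^ d * q := by ring
    have p3 : q ^ (2 * (m + 1 + d)) = (q ^ m * q * q ^ d) ^ 2 := by ring
    have p4 : q ^ (m + 1) = q ^ m * q := by ring
    rw [p1, p2, p3, p4]
    have n1 : q ^ m ≠ 0 := pow_ne_zero _ hq
    have n2 : q ^ d ≠ 0 := pow_ne_zero _ hq
    generalize q ^ m = s at *
    generalize q ^ d = t at *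
    have h3 : 1 - s * q ≠ 0 := by rwa [mul_comm s q]
    field_simp
    ring

/-- The `q`-Pfaff–Saalschütz sum in polynomial form. -/
lemma sum_saalTerm (q B u v : ℂ) (hq : q ≠ 0) (N : ℕ) (hqN : qPoch q q N ≠ 0) :
    ∑ k ∈ Finset.range (N + 1), saalTerm q B u v N k = qPoch q u N * qPoch q v N * B ^ N := by
  induction N with
  | zero => simp [saalTerm, qPoch_zero]
  | succ N ih =>
    have hN := qPoch_ne_zero_of_le (Nat.le_succ N) hqN
    have key := sum_saalTerm_partial q B u v hq N hN N le_rfl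
    rw [Finset.sum_sub_distrib, ← Finset.mul_sum, ih hN, sub_eq_iff_eq_add] at key
    rw [Finset.sum_range_succ, key, qPoch_succ q u, qPoch_succ q v]
    have f1 : (q ^ (N + 1))⁻¹ * q = (q ^ N)⁻¹ := by
      rw [pow_succ q N]; field_simp
    have f2 : B * u * v * q ^ (N + 1) / q = B * u * v * q ^ N := by
      rw [pow_succ q N]; field_simp
    have hlast : saalTerm q B u v (N + 1) (N + 1) = - ((1 - B * u * v * q ^ (2 * N)) *
        (qPoch q (q ^ N)⁻¹ N * qPoch q (B * u * v * q ^ N) N * qPoch q B (N + 1) /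
          qPoch q q N)) := by
      simp only [saalTerm, f2, Nat.sub_self, qPoch_zero]
      rw [qPoch_succ' q (q ^ (N + 1))⁻¹ N, f1, qPoch_succ q (B * u * v * q ^ N) N]
      rw [qPoch_succ q q] at hqN ⊢
      have h2 := right_ne_zero_of_mul hqN
      have n1 : q ^ N ≠ 0 := pow_ne_zero _ hq
      rw [show q ^ (N + 1) = q * q ^ N by ring, show q ^ (2 * N) = q ^ N * q ^ N by ring]
      field_simp
      ring
    rw [hlast]
    simp only [Nat.sub_self, qPoch_zero]
    ring

/-! ### Symmetry of the Askey-Wilson polynomial in its parameters -/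

/-- Connection coefficient of `(bz, b/z; q)_j` in `(az, a/z; q)_{j+m}`. -/
noncomputable def connCoeff (q a b : ℂ) (j m : ℕ) : ℂ :=
  qPoch q q (j + m) / (qPoch q q j * qPoch q q m) * (a / b) ^ j *
    (qPoch q (a * b * q ^ j) m * qPoch q (a / b) m)

/-- Splitting each term of a sum over `j + m = k + 1` into a contribution `α (j - 1) m` and a
contribution `β j (m - 1)`, as in Pascal's rule. -/
lemma sum_antidiagonal_pascal (f α β : ℕ → ℕ → ℂ) (k : ℕ) (h0 : f 0 (k + 1) = β 0 k)
    (hk : f (k + 1) 0 = α k 0)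
    (h : ∀ j m, j + m + 1 = k → f (j + 1) (m + 1) = α j (m + 1) + β (j + 1) m) :
    ∑ p ∈ Finset.HasAntidiagonal.antidiagonal (k + 1), f p.1 p.2 =
      ∑ p ∈ Finset.HasAntidiagonal.antidiagonal k, (α p.1 p.2 + β p.1 p.2) := by
  let g1 : ℕ → ℕ → ℂ := fun j m => match j with
    | 0 => 0
    | j + 1 => α j m
  let g2 : ℕ → ℕ → ℂ := fun j m => match m with
    | 0 => 0
    | m + 1 => β j m
  have hf : ∀ p ∈ Finset.HasAntidiagonal.antidiagonal (k + 1), f p.1 p.2 = g1 p.1 p.2 + g2 p.1 p.2 := by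
    rintro ⟨j, m⟩ hp
    rw [Finset.HasAntidiagonal.mem_antidiagonal] at hp
    rcases j with _ | j <;> rcases m with _ | m
    · simp at hp
    · obtain rfl : m = k := by simpa using hp
      simpa [g1, g2] using h0
    · obtain rfl : j = k := by simpa using hp
      simpa [g1, g2] using hk
    · exact h j m (by simp only at hp; omega)
  rw [Finset.sum_congr rfl hf, Finset.sum_add_distrib, Finset.sum_add_distrib,
    Finset.Nat.sum_antidiagonal_succ (f := fun p => g1 p.1 p.2),
    Finset.Nat.sum_antidiagonal_succ' (f := fun p => g2 p.1 p.2)]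
  simp [g1, g2]

/-- Expansion of `(az, a/z; q)_k` in the `(bz, b/z; q)_j`. -/
lemma connection (q a b z : ℂ) (hb : b ≠ 0) (hz : z ≠ 0) (k : ℕ) (hqk : qPoch q q k ≠ 0) :
    qPoch q (a * z) k * qPoch q (a / z) k = ∑ p ∈ Finset.HasAntidiagonal.antidiagonal k,
      connCoeff q a b p.1 p.2 * (qPoch q (b * z) p.1 * qPoch q (b / z) p.1) := by
  induction k with
  | zero => simp [connCoeff, qPoch_zero]
  | succ k ih =>
    have hk := qPoch_ne_zero_of_le (Nat.le_succ k) hqk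
    have hk1 : 1 - q * q ^ k ≠ 0 := by
      rw [qPoch_succ] at hqk; exact right_ne_zero_of_mul hqk
    rw [sum_antidiagonal_pascal
      (fun j m => connCoeff q a b j m * (qPoch q (b * z) j * qPoch q (b / z) j))
      (fun j m => connCoeff q a b j m * (a / b * q ^ m) *
        (qPoch q (b * z) (j + 1) * qPoch q (b / z) (j + 1)))
      (fun j m => connCoeff q a b j m * ((1 - a * b * q ^ (2 * j + m)) * (1 - a / b * q ^ m)) *
        (qPoch q (b * z) j * qPoch q (b / z) j))]
    · rw [qPoch_succ, qPoch_succ, mul_mul_mul_comm, ih hk, Finset.sum_mul]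
      refine Finset.sum_congr rfl ?_
      rintro ⟨j, m⟩ hp
      rw [Finset.HasAntidiagonal.mem_antidiagonal] at hp
      -- `(1 - azq^k)(1 - aq^k/z)` is a combination of `(1 - bzq^j)(1 - bq^j/z)` and a constant.
      simp only at hp ⊢
      subst hp
      rw [qPoch_succ, qPoch_succ, two_mul, pow_add, pow_add, pow_add]
      field_simp
      ring
    · simp only [connCoeff, qPoch_zero, qPoch_succ, zero_add]
      field_simp
      ring
    · simp only [connCoeff, qPoch_zero, qPoch_succ, add_zero, pow_succ]
      field_simp
    · intro j m hjm
      subst hjm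
      have e : j + 1 + (m + 1) = j + m + 1 + 1 := by ring
      have e' : j + 1 + m = j + m + 1 := by ring
      have e'' : j + (m + 1) = j + m + 1 := by ring
      have hj := qPoch_ne_zero_of_le (show j + 1 ≤ j + m + 1 by omega) hk
      have hm := qPoch_ne_zero_of_le (show m + 1 ≤ j + m + 1 by omega) hk
      have g1 : qPoch q (a * b * q ^ j) (m + 1)
          = (1 - a * b * q ^ j) * qPoch q (a * b * q ^ (j + 1)) m := by
        rw [qPoch_succ', mul_assoc (a * b), ← pow_succ]
      simp only [connCoeff, e, e', e'', g1]
      rw [qPoch_succ q q (j + m + 1), qPoch_succ q (a * b * q ^ (j + 1)) m,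
        qPoch_succ q (a / b) m]
      rw [qPoch_succ] at hj hm
      rw [qPoch_succ q q j, qPoch_succ q q m]
      have h1 := left_ne_zero_of_mul hj
      have h2 := right_ne_zero_of_mul hj
      have h3 := left_ne_zero_of_mul hm
      have h4 := right_ne_zero_of_mul hm
      generalize qPoch q (b * z) (j + 1) = x1
      generalize qPoch q (b / z) (j + 1) = x2
      generalize qPoch q (a / b) m = x3
      generalize qPoch q (a * b * q ^ (j + 1)) m = x4
      rw [show 2 * (j + 1) + m = j + j + m + 1 + 1 by ring]
      simp only [pow_succ, pow_add] at *
      field_simp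
      ring

/-- Coefficient of `(az, a/z; q)_k` in the Askey-Wilson polynomial `p_n(x; a,b,c,d; q)`, written so
that only `(q; q)_k` appears in a denominator. -/
noncomputable def awCoeff (q a b c d : ℂ) (n k : ℕ) : ℂ :=
  (a ^ n)⁻¹ * (qPoch q (q ^ n)⁻¹ k * qPoch q (a * b * c * d * q ^ n / q) k * q ^ k / qPoch q q k) *
    (qPoch q (a * b * q ^ k) (n - k) * qPoch q (a * c * q ^ k) (n - k) *
      qPoch q (a * d * q ^ k) (n - k))

lemma qPoch_div (q x : ℂ) {n k : ℕ} (hk : k ≤ n) (h : qPoch q x k ≠ 0) :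
    qPoch q (x * q ^ k) (n - k) = qPoch q x n / qPoch q x k := by
  rw [eq_div_iff h, mul_comm, ← qPoch_add, Nat.add_sub_cancel' hk]

lemma awPoly_eq_sum (q a b c d z : ℂ) (hq : q ≠ 0) (n : ℕ)
    (hden : ∀ k ≤ n, qPoch q q k ≠ 0 ∧ qPoch q (a * b) k ≠ 0 ∧ qPoch q (a * c) k ≠ 0 ∧
      qPoch q (a * d) k ≠ 0) :
    awPoly q a b c d z n = ∑ k ∈ Finset.range (n + 1),
      awCoeff q a b c d n k * (qPoch q (a * z) k * qPoch q (a / z) k) := by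
  rw [awPoly, Finset.mul_sum]
  refine Finset.sum_congr rfl fun k hk => ?_
  have hk' : k ≤ n := by simpa [Nat.lt_succ_iff] using hk
  obtain ⟨h1, h2, h3, h4⟩ := hden k hk'
  rw [awCoeff, qPoch_div q _ hk' h2, qPoch_div q _ hk' h3, qPoch_div q _ hk' h4, zpow_sub_one₀ hq,
    zpow_neg, zpow_neg, zpow_natCast, zpow_natCast, ← div_eq_mul_inv, ← mul_div_assoc]
  field_simp

/-- The connection coefficients carry the `a`-expansion to the `b`-expansion; this is the sum
behind Sears' transformation. -/
lemma sum_awCoeff_mul_connCoeff (q a b c d : ℂ) (hq : q ≠ 0) (ha : a ≠ 0) (hb : b ≠ 0)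
    (j N : ℕ) (hqN : qPoch q q (j + N) ≠ 0) :
    ∑ m ∈ Finset.range (N + 1), awCoeff q a b c d (j + N) (j + m) * connCoeff q a b j m
      = awCoeff q b a c d (j + N) j := by
  have hj := qPoch_ne_zero_of_le (Nat.le_add_right j N) hqN
  have hN := qPoch_ne_zero_of_le (Nat.le_add_left N j) hqN
  have key := sum_saalTerm q (a / b) (b * c * q ^ j) (b * d * q ^ j) hq N hN
  have hterm : ∀ m ∈ Finset.range (N + 1),
      awCoeff q a b c d (j + N) (j + m) * connCoeff q a b j m =
      (a ^ (j + N))⁻¹ * (qPoch q (q ^ (j + N))⁻¹ j *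
        qPoch q (a * b * c * d * q ^ (j + N) / q) j * q ^ j / qPoch q q j) * (a / b) ^ j *
        qPoch q (a * b * q ^ j) N *
        saalTerm q (a / b) (b * c * q ^ j) (b * d * q ^ j) N m := by
    intro m hm
    obtain ⟨t, rfl⟩ := Nat.exists_eq_add_of_le (Nat.lt_succ_iff.mp (Finset.mem_range.mp hm))
    have hjm := qPoch_ne_zero_of_le (show j + m ≤ j + (m + t) by omega) hqN
    have hm' := qPoch_ne_zero_of_le (Nat.le_add_right m t) hN
    have f1 : (q ^ (j + (m + t)))⁻¹ * q ^ j = (q ^ (m + t))⁻¹ := by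
      rw [pow_add]; field_simp
    have f2 : a * b * c * d * q ^ (j + (m + t)) / q * q ^ j
        = a / b * (b * c * q ^ j) * (b * d * q ^ j) * q ^ (m + t) / q := by
      rw [pow_add]; field_simp
    have f3 : a / b * (b * c * q ^ j) * q ^ m = a * c * q ^ (j + m) := by
      rw [pow_add]; field_simp
    have f4 : a / b * (b * d * q ^ j) * q ^ m = a * d * q ^ (j + m) := by
      rw [pow_add]; field_simp
    rw [awCoeff, connCoeff, saalTerm, qPoch_add q (q ^ (j + (m + t)))⁻¹, f1,
      qPoch_add q (a * b * c * d * q ^ (j + (m + t)) / q), f2, f3, f4,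
      qPoch_add q (a * b * q ^ j) m t, mul_assoc (a * b) (q ^ j) (q ^ m), ← pow_add,
      show j + (m + t) - (j + m) = t by omega, Nat.add_sub_cancel_left, pow_add q j m]
    field_simp
  rw [Finset.sum_congr rfl hterm, ← Finset.mul_sum, key, awCoeff, Nat.add_sub_cancel_left,
    mul_comm b a]
  have : (a ^ (j + N))⁻¹ * (a / b) ^ j * (a / b) ^ N = (b ^ (j + N))⁻¹ := by
    rw [mul_assoc, ← pow_add, div_pow]; field_simp
  rw [← this]
  ring

/-- The polynomial `p_n` also expands in the `(bz, b/z; q)_j`, with the coefficients obtained by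
exchanging `a` and `b`. -/
lemma awPoly_eq_sum_b (q a b c d z : ℂ) (hq : q ≠ 0) (ha : a ≠ 0) (hb : b ≠ 0) (hz : z ≠ 0)
    (n : ℕ)
    (hden : ∀ k ≤ n, qPoch q q k ≠ 0 ∧ qPoch q (a * b) k ≠ 0 ∧ qPoch q (a * c) k ≠ 0 ∧
      qPoch q (a * d) k ≠ 0) :
    awPoly q a b c d z n = ∑ j ∈ Finset.range (n + 1),
      awCoeff q b a c d n j * (qPoch q (b * z) j * qPoch q (b / z) j) := by
  rw [awPoly_eq_sum q a b c d z hq n hden]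
  let f : ℕ → ℕ → ℂ := fun j m => awCoeff q a b c d n (j + m) *
    connCoeff q a b j m * (qPoch q (b * z) j * qPoch q (b / z) j)
  have h1 : ∀ k ∈ Finset.range (n + 1),
      awCoeff q a b c d n k * (qPoch q (a * z) k * qPoch q (a / z) k) =
      ∑ j ∈ Finset.range (k + 1), f j (k - j) := by
    intro k hk
    rw [connection q a b z hb hz k (hden k (Nat.lt_succ_iff.mp (Finset.mem_range.mp hk))).1,
      Finset.Nat.sum_antidiagonal_eq_sum_range_succ_mk, Finset.mul_sum]
    refine Finset.sum_congr rfl fun j hj => ?_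
    simp only [f]
    rw [Nat.add_sub_cancel' (Nat.lt_succ_iff.mp (Finset.mem_range.mp hj)), mul_assoc]
  rw [Finset.sum_congr rfl h1, Finset.sum_range_diag_flip (n + 1) f]
  refine Finset.sum_congr rfl fun j hj => ?_
  obtain ⟨N, rfl⟩ := Nat.exists_eq_add_of_le (Nat.lt_succ_iff.mp (Finset.mem_range.mp hj))
  simp only [f]
  rw [← Finset.sum_mul, show j + N + 1 - j = N + 1 by omega,
    sum_awCoeff_mul_connCoeff q a b c d hq ha hb j N (hden _ le_rfl).1]

/-! ### Moments and orthogonality -/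

/-- The moment `L((az, a/z; q)_i (bz, b/z; q)_j)` of the Askey-Wilson functional `L`, normalised by
`L(1) = 1`. -/
noncomputable def awMoment (q a b c d : ℂ) (i j : ℕ) : ℂ :=
  qPoch q (a * c) i * qPoch q (a * d) i * qPoch q (b * c) j * qPoch q (b * d) j *
    qPoch q (a * b) (i + j) / qPoch q (a * b * c * d) (i + j)

/-- The pairing `L(p_n · (az, a/z; q)_i)`. For `i < n` it vanishes, because of the factor
`(q⁻ⁱ; q)_n`. -/
lemma sum_awCoeff_mul_awMoment (q a b c d : ℂ) (hq : q ≠ 0) (ha : a ≠ 0) (hb : b ≠ 0)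
    (n i : ℕ) (hqn : qPoch q q n ≠ 0)
    (hD : qPoch q (a * b * c * d) (i + n) ≠ 0) :
    ∑ j ∈ Finset.range (n + 1), awCoeff q b a c d n j * awMoment q a b c d i j
      = (b ^ n)⁻¹ * (qPoch q (a * c) i * qPoch q (a * d) i * qPoch q (a * b) i *
          qPoch q (b * c) n * qPoch q (b * d) n) / qPoch q (a * b * c * d) (i + n) *
        (qPoch q (c * d) n * qPoch q (q ^ i)⁻¹ n * (a * b * q ^ i) ^ n) := by
  have key := sum_saalTerm q (a * b * q ^ i) (c * d) (q ^ i)⁻¹ hq n hqn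
  rw [← key, Finset.mul_sum]
  refine Finset.sum_congr rfl fun j hj => ?_
  obtain ⟨t, rfl⟩ := Nat.exists_eq_add_of_le (Nat.lt_succ_iff.mp (Finset.mem_range.mp hj))
  have f1 : a * b * q ^ i * (c * d) * (q ^ i)⁻¹ * q ^ (j + t) / q
      = b * a * c * d * q ^ (j + t) / q := by field_simp
  have f2 : a * b * q ^ i * (q ^ i)⁻¹ * q ^ j = b * a * q ^ j := by field_simp
  have f3 : a * b * q ^ i * (c * d) * q ^ j = a * b * c * d * q ^ (i + j) := by
    rw [pow_add]; ring
  rw [← add_assoc, qPoch_add] at hD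
  have h1 := left_ne_zero_of_mul hD
  have h2 := right_ne_zero_of_mul hD
  have hj := qPoch_ne_zero_of_le (Nat.le_add_right j t) hqn
  rw [awCoeff, awMoment, saalTerm, f1, f2, f3, ← add_assoc, qPoch_add q (a * b * c * d) (i + j) t,
    qPoch_add q (a * b) i j, qPoch_add q (b * c) j t, qPoch_add q (b * d) j t,
    Nat.add_sub_cancel_left]
  generalize (b ^ (j + t))⁻¹ = w
  generalize qPoch q (q ^ (j + t))⁻¹ j = x1
  generalize qPoch q (b * a * c * d * q ^ (j + t) / q) j = x2
  generalize qPoch q (b * a * q ^ j) t = x3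
  generalize qPoch q (a * b * c * d) (i + j) = x4 at *
  generalize qPoch q (a * b * c * d * q ^ (i + j)) t = x5 at *
  generalize qPoch q q j = x6 at *
  generalize qPoch q (b * c * q ^ j) t = x7
  generalize qPoch q (b * d * q ^ j) t = x8
  generalize qPoch q (a * b * q ^ i) j = x9
  generalize qPoch q (b * c) j = x10
  generalize qPoch q (b * d) j = x11
  generalize qPoch q (a * b) i = x12
  generalize qPoch q (a * c) i = x13
  generalize qPoch q (a * d) i = x14
  clear * - h2
  have h5 : x5⁻¹ * x5 = 1 := inv_mul_cancel₀ h2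
  linear_combination (-(w * x1 * x2 * q ^ j * x6⁻¹ * x3 * x7 * x8 * x13 * x14 * x10 * x11 * x12 *
    x9 * x4⁻¹)) * h5

/-! ### The determinants -/

/-- If the vector `e` is annihilated by the first `n` rows, adding the combination `e` of all columns
to the last one makes that column zero except in the bottom entry. -/
lemma det_bordered (n : ℕ) (M : ℕ → ℕ → ℂ) (r e : ℕ → ℂ)
    (h : ∀ i < n, ∑ j ∈ Finset.range (n + 1), e j * M i j = 0) :
    e n * Matrix.det (Matrix.of fun i j : Fin (n + 1) => if (i : ℕ) < n then M i j else r j) =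
      (∑ j ∈ Finset.range (n + 1), e j * r j) *
        Matrix.det (Matrix.of fun i j : Fin n => M i j) := by
  set A : Matrix (Fin (n + 1)) (Fin (n + 1)) ℂ :=
    Matrix.of fun i j => if (i : ℕ) < n then M i j else r j with hA
  have key := Matrix.det_updateCol_sum A (Fin.last n) (fun j => e j)
  simp only [smul_eq_mul, Fin.val_last] at key
  rw [← key, Matrix.det_succ_column _ (Fin.last n), Fin.sum_univ_castSucc,
    Finset.sum_eq_zero, zero_add]
  · have hsub : (A.updateCol (Fin.last n) fun k => ∑ i : Fin (n + 1), e i * A k i).submatrix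
        (Fin.last n).succAbove (Fin.last n).succAbove = Matrix.of fun i j : Fin n => M i j := by
      ext i j
      simp [hA, (Fin.castSucc_lt_last j).ne]
    rw [hsub]
    simp [hA, Finset.sum_range, ← two_mul]
  · intro i _
    have hi : ∑ j : Fin (n + 1), e j * A i.castSucc j = 0 := by
      rw [← h i i.isLt, Finset.sum_range]
      simp [hA]
    simp [hi]

lemma qPoch_inv_pow_self (q : ℂ) (hq : q ≠ 0) (n : ℕ) :
    qPoch q (q ^ n)⁻¹ n = (-1) ^ n * qPoch q q n / q ^ (n * (n + 1) / 2) := by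
  induction n with
  | zero => simp [qPoch_zero]
  | succ n ih =>
    have f1 : (q ^ (n + 1))⁻¹ * q = (q ^ n)⁻¹ := by
      rw [pow_succ q n]; field_simp
    have f2 : (n + 1) * (n + 1 + 1) / 2 = n * (n + 1) / 2 + (n + 1) := by
      rw [show (n + 1) * (n + 1 + 1) = n * (n + 1) + 2 * (n + 1) by ring,
        Nat.add_mul_div_left _ _ two_pos]
    rw [qPoch_succ', f1, ih, f2, qPoch_succ, pow_add, pow_succ, pow_succ]
    field_simp
    ring

lemma qPoch_inv_pow_eq_zero (q : ℂ) (hq : q ≠ 0) {i n : ℕ} (h : i < n) :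
    qPoch q (q ^ i)⁻¹ n = 0 :=
  Finset.prod_eq_zero (Finset.mem_range.mpr h) (by field_simp; simp)

/-- The constant `C` in the determinant formula. -/
noncomputable def gramConst (q a b c d : ℂ) (n : ℕ) : ℂ :=
  (-1) ^ n * a ^ (n * (n - 1) / 2) * b ^ (n * (n + 1) / 2) *
    q ^ (n * (n - 1) * (2 * n - 1) / 6) *
    (∏ i ∈ Finset.range n,
      qPoch q (a * b) i * qPoch q (a * c) i * qPoch q (a * d) i * qPoch q (b * c) i *
        qPoch q (b * d) i * qPoch q (c * d) i * qPoch q q i /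
        qPoch q (a * b * c * d) (n + i))

lemma awCoeff_self (q a b c d : ℂ) (n : ℕ) : awCoeff q b a c d n n =
    (b ^ n)⁻¹ * (qPoch q (q ^ n)⁻¹ n * qPoch q (a * b * c * d * q ^ n / q) n * q ^ n /
      qPoch q q n) := by
  simp [awCoeff, qPoch_zero, mul_comm b a]

lemma awCoeff_self_ne_zero (q a b c d : ℂ) (hq : q ≠ 0) (hb : b ≠ 0) (n : ℕ)
    (hqn : qPoch q q n ≠ 0) (hD : qPoch q (a * b * c * d) (2 * n - 1) ≠ 0) :
    awCoeff q b a c d n n ≠ 0 := by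
  have h1 : qPoch q (a * b * c * d * q ^ n / q) n ≠ 0 := by
    rcases n with _ | m
    · simp [qPoch_zero]
    · rw [show 2 * (m + 1) - 1 = m + (m + 1) by omega, qPoch_add] at hD
      rw [show a * b * c * d * q ^ (m + 1) / q = a * b * c * d * q ^ m by
        rw [pow_succ]; field_simp]
      exact right_ne_zero_of_mul hD
  rw [awCoeff_self, qPoch_inv_pow_self q hq]
  have := pow_ne_zero n hb
  have := pow_ne_zero n hq
  have := pow_ne_zero (n * (n + 1) / 2) hq
  have : ((-1 : ℂ)) ^ n ≠ 0 := pow_ne_zero _ (by norm_num)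
  simp_all

/-- The recurrence for `gramConst`: multiplying by the pairing `L(p_n · (az, a/z; q)_n)` has the same
effect as raising the index and multiplying by the leading coefficient of `p_{n+1}`. -/
lemma gramConst_succ (q a b c d : ℂ) (hq : q ≠ 0) (hb : b ≠ 0) (n : ℕ)
    (hqn : qPoch q q (n + 1) ≠ 0) (hD : qPoch q (a * b * c * d) (2 * n + 1) ≠ 0) :
    gramConst q a b c d (n + 1) * awCoeff q b a c d (n + 1) (n + 1) =
      ((b ^ n)⁻¹ * (qPoch q (a * c) n * qPoch q (a * d) n * qPoch q (a * b) n *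
          qPoch q (b * c) n * qPoch q (b * d) n) / qPoch q (a * b * c * d) (n + n) *
        (qPoch q (c * d) n * qPoch q (q ^ n)⁻¹ n * (a * b * q ^ n) ^ n)) *
        gramConst q a b c d n := by
  have hqn' := qPoch_ne_zero_of_le (Nat.le_succ n) hqn
  have hDk : ∀ k ≤ 2 * n + 1, qPoch q (a * b * c * d) k ≠ 0 := fun k hk =>
    qPoch_ne_zero_of_le hk hD
  have hE : qPoch q (a * b * c * d) (n + n + 1) =
      qPoch q (a * b * c * d) n * qPoch q (a * b * c * d * q ^ n) (n + 1) := by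
    rw [add_assoc, qPoch_add]
  have hprod : qPoch q (a * b * c * d) n *
      ∏ i ∈ Finset.range (n + 1), qPoch q (a * b * c * d) (n + 1 + i) =
      (∏ i ∈ Finset.range n, qPoch q (a * b * c * d) (n + i)) *
        qPoch q (a * b * c * d) (n + n) * qPoch q (a * b * c * d) (n + n + 1) := by
    rw [add_assoc n n 1, ← Finset.prod_range_succ, ← Finset.prod_range_succ,
      Finset.prod_range_succ' _ (n + 1), mul_comm]
    simp only [add_zero, add_assoc, add_comm 1]
  have hP1 : ∏ i ∈ Finset.range (n + 1), qPoch q (a * b * c * d) (n + 1 + i) ≠ 0 :=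
    Finset.prod_ne_zero_iff.mpr fun i hi => hDk _ (by have := Finset.mem_range.mp hi; omega)
  have hP0 : ∏ i ∈ Finset.range n, qPoch q (a * b * c * d) (n + i) ≠ 0 :=
    Finset.prod_ne_zero_iff.mpr fun i hi => hDk _ (by have := Finset.mem_range.mp hi; omega)
  have h2n := hDk (n + n) (by omega)
  have h2n1 := hDk (n + n + 1) (by omega)
  have hn0 := hDk n (by omega)
  have ea : (n + 1) * (n + 1 - 1) / 2 = n * (n - 1) / 2 + n := Nat.triangle_succ n
  have eb : (n + 1) * (n + 1 + 1) / 2 = n * (n + 1) / 2 + (n + 1) := by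
    rw [show (n + 1) * (n + 1 + 1) = n * (n + 1) + 2 * (n + 1) by ring,
      Nat.add_mul_div_left _ _ two_pos]
  have eq' : (n + 1) * (n + 1 - 1) * (2 * (n + 1) - 1) / 6
      = n * (n - 1) * (2 * n - 1) / 6 + n * n := by
    rcases n with _ | m
    · rfl
    · rw [← Nat.add_mul_div_left _ _ (show 0 < 6 by norm_num)]
      congr 1
      rw [show 2 * (m + 1 + 1) - 1 = 2 * m + 3 by omega, show 2 * (m + 1) - 1 = 2 * m + 1 by omega,
        Nat.add_sub_cancel, Nat.add_sub_cancel]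
      ring
  have f2 : a * b * c * d * q ^ (n + 1) / q = a * b * c * d * q ^ n := by
    rw [pow_succ]; field_simp
  rw [awCoeff_self, gramConst, gramConst, qPoch_inv_pow_self q hq, qPoch_inv_pow_self q hq, f2,
    ea, eb, eq', Finset.prod_div_distrib, Finset.prod_div_distrib]
  rw [Finset.prod_range_succ (fun i => qPoch q (a * b) i * qPoch q (a * c) i * qPoch q (a * d) i *
    qPoch q (b * c) i * qPoch q (b * d) i * qPoch q (c * d) i * qPoch q q i)]
  -- Only the denominator products change with `n`; `hprod` relates them by telescoping.
  have hP1' := eq_div_of_mul_eq hn0 ((mul_comm _ _).trans hprod)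
  rw [hE] at hP1' h2n1
  have h5 := right_ne_zero_of_mul h2n1
  rw [hP1']
  simp only [mul_pow, ← pow_mul, pow_add, pow_one]
  generalize ∏ i ∈ Finset.range n, qPoch q (a * b * c * d) (n + i) = y0 at *
  generalize qPoch q (a * b * c * d) (n + n) = y1 at *
  generalize qPoch q (a * b * c * d) n = y2 at *
  generalize qPoch q (a * b * c * d * q ^ n) (n + 1) = y3 at *
  generalize qPoch q q (n + 1) = y4 at *
  generalize qPoch q q n = y5 at *
  generalize ∏ i ∈ Finset.range n, (qPoch q (a * b) i * qPoch q (a * c) i * qPoch q (a * d) i *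
    qPoch q (b * c) i * qPoch q (b * d) i * qPoch q (c * d) i * qPoch q q i) = y6
  generalize n * (n + 1) / 2 = k1
  generalize n * (n - 1) / 2 = k2
  generalize n * (n - 1) * (2 * n - 1) / 6 = k3
  clear hprod hP1 hP1' hE hDk hD ea eb eq' f2
  have hB := pow_ne_zero n hb
  have hQ := pow_ne_zero n hq
  have hK := pow_ne_zero k1 hq
  generalize qPoch q (a * b) n = z1
  generalize qPoch q (a * c) n = z2
  generalize qPoch q (a * d) n = z3
  generalize qPoch q (b * c) n = z4
  generalize qPoch q (b * d) n = z5
  generalize qPoch q (c * d) n = z6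
  generalize b ^ n = B at *
  generalize b ^ k1 = B1 at *
  generalize q ^ n = Q at *
  generalize q ^ k1 = K at *
  generalize q ^ k3 = K3 at *
  generalize q ^ (n * n) = K2 at *
  generalize a ^ n = A at *
  generalize a ^ k2 = A2 at *
  generalize (-1 : ℂ) ^ n = s at *
  have e1 : y0 * y1 * (y2 * y3) / y2 = y0 * y1 * y3 := by field_simp
  have e2 : s * -1 * y4 / (K * (Q * q)) * y3 * (Q * q) / y4 = -(s * y3 / K) := by field_simp
  rw [e1, e2]
  trans s * s * (A2 * A) * B1 * (K3 * K2) * y6 * (z1 * z2 * z3 * z4 * z5 * z6 * y5) *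
    (y0⁻¹ * y1⁻¹ * K⁻¹)
  · rw [mul_inv_rev, div_eq_mul_inv, div_eq_mul_inv, mul_inv, mul_inv]
    generalize y0⁻¹ = i0, y1⁻¹ = i1, K⁻¹ = iK
    linear_combination (s * s * (A2 * A) * B1 * (K3 * K2) * y6 *
      (z1 * z2 * z3 * z4 * z5 * z6 * y5) * (i0 * i1 * iK)) *
      (y3 * y3⁻¹ * (b * b⁻¹) * mul_inv_cancel₀ hB + y3 * y3⁻¹ * mul_inv_cancel₀ hb +
        mul_inv_cancel₀ h5)
  · rw [div_eq_mul_inv, div_eq_mul_inv, div_eq_mul_inv]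
    linear_combination -(s * s * (A2 * A) * B1 * (K3 * K2) * y6 *
      (z1 * z2 * z3 * z4 * z5 * z6 * y5) * (y0⁻¹ * y1⁻¹ * K⁻¹)) * mul_inv_cancel₀ hB

lemma det_awMoment (q a b c d : ℂ) (hq : q ≠ 0) (ha : a ≠ 0) (hb : b ≠ 0) (n : ℕ)
    (hqn : qPoch q q n ≠ 0) (hD : qPoch q (a * b * c * d) (2 * n - 1) ≠ 0) :
    Matrix.det (Matrix.of fun i j : Fin n => awMoment q a b c d i j) =
      gramConst q a b c d n * awCoeff q b a c d n n := by
  induction n with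
  | zero => simp [gramConst, awCoeff_self, qPoch_zero]
  | succ n ih =>
    rw [show 2 * (n + 1) - 1 = 2 * n + 1 by omega] at hD
    have hqn' := qPoch_ne_zero_of_le (Nat.le_succ n) hqn
    have hD' := qPoch_ne_zero_of_le (show 2 * n - 1 ≤ 2 * n + 1 by omega) hD
    have he := awCoeff_self_ne_zero q a b c d hq hb n hqn' hD'
    have key := det_bordered n (awMoment q a b c d) (awMoment q a b c d n)
      (awCoeff q b a c d n) (fun i hi => by
        rw [sum_awCoeff_mul_awMoment q a b c d hq ha hb n i hqn'
          (qPoch_ne_zero_of_le (by omega) hD), qPoch_inv_pow_eq_zero q hq hi]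
        ring)
    rw [sum_awCoeff_mul_awMoment q a b c d hq ha hb n n hqn'
      (qPoch_ne_zero_of_le (by omega) hD), ih hqn' hD'] at key
    have hM : (Matrix.of fun i j : Fin (n + 1) => awMoment q a b c d i j) =
        Matrix.of fun i j : Fin (n + 1) =>
          if (i : ℕ) < n then awMoment q a b c d i j else awMoment q a b c d n j := by
      ext i j
      simp only [Matrix.of_apply]
      split_ifs with h
      · rfl
      · rw [show (i : ℕ) = n by omega]
    rw [hM, gramConst_succ q a b c d hq hb n hqn hD]
    apply mul_left_cancel₀ he
    rw [key]
    ring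

/-- Gram determinant formula for Askey-Wilson polynomials (Theorem 4.1):
the `(n+1)×(n+1)` matrix has rows `0,…,n-1` given by the moments
`(ac,ad;q)_i (bc,bd;q)_j (ab;q)_{i+j}/(abcd;q)_{i+j}` and last row `(bz,b/z;q)_j`. -/
theorem gram_det_askey_wilson
    (q a b c d z : ℂ) (hq : q ≠ 0) (ha : a ≠ 0) (hb : b ≠ 0) (hc : c ≠ 0) (hd : d ≠ 0)
    (hz : z ≠ 0) (x : ℂ) (hx : x = (z + z⁻¹) / 2) (n : ℕ) (hn : 1 ≤ n)
    (habcd : qPoch q (a * b * c * d) (2 * n - 1) ≠ 0)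
    (hden : ∀ k ≤ n, qPoch q q k ≠ 0 ∧ qPoch q (a * b) k ≠ 0 ∧ qPoch q (a * c) k ≠ 0 ∧
      qPoch q (a * d) k ≠ 0) :
    Matrix.det (Matrix.of fun i j : Fin (n + 1) =>
        if (i : ℕ) < n then
          qPoch q (a * c) (i : ℕ) * qPoch q (a * d) (i : ℕ) *
            qPoch q (b * c) (j : ℕ) * qPoch q (b * d) (j : ℕ) *
            qPoch q (a * b) ((i : ℕ) + (j : ℕ)) / qPoch q (a * b * c * d) ((i : ℕ) + (j : ℕ))
        else qPoch q (b * z) (j : ℕ) * qPoch q (b / z) (j : ℕ))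
      = (-1) ^ n * a ^ (n * (n - 1) / 2) * b ^ (n * (n + 1) / 2) *
          q ^ (n * (n - 1) * (2 * n - 1) / 6) *
          (∏ i ∈ Finset.range n,
            qPoch q (a * b) i * qPoch q (a * c) i * qPoch q (a * d) i * qPoch q (b * c) i *
              qPoch q (b * d) i * qPoch q (c * d) i * qPoch q q i /
              qPoch q (a * b * c * d) (n + i)) *
          awPoly q a b c d z n := by

  obtain ⟨hqn, -, -, -⟩ := hden n le_rfl
  have he := awCoeff_self_ne_zero q a b c d hq hb n hqn habcd
  have key := det_bordered n (awMoment q a b c d)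
    (fun j => qPoch q (b * z) j * qPoch q (b / z) j) (awCoeff q b a c d n) (fun i hi => by
      rw [sum_awCoeff_mul_awMoment q a b c d hq ha hb n i hqn
        (qPoch_ne_zero_of_le (by omega) habcd), qPoch_inv_pow_eq_zero q hq hi]
      ring)
  rw [← awPoly_eq_sum_b q a b c d z hq ha hb hz n hden,
    det_awMoment q a b c d hq ha hb n hqn habcd] at key
  apply mul_left_cancel₀ he
  refine key.trans ?_
  rw [gramConst]
  ring
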